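/- Let θ ∈ (0, 1), let 0 < μ ≤ 1/√n, let X₀ ∈ ℝ^{n×p} have i.i.d. BG(θ) entries, and fix any w ∈ Γ with w ≠ 0. Then for every t > 0, P[ | wᵀ∇²g(w; X₀)w/‖w‖² − E[wᵀ∇²g(w; X₀)w/‖w‖²] | ≥ t ] ≤ 4 exp( −p μ² t² / (512 n² + 32 n μ t) ). -/

import Mathlib

open MeasureTheory ProbabilityTheory Real Matrix
open scoped RealInnerProductSpace ENNReal NNReal

noncomputable section

/-- The Bernoulli–Gaussian law `BG(θ)`: with probability `θ` a standard Gaussian,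
with probability `1-θ` a point mass at `0`. -/
def bg (θ : ℝ) : Measure ℝ :=
  θ.toNNReal • gaussianReal 0 1 + (1 - θ).toNNReal • Measure.dirac 0

instance bg.instIsFiniteMeasure (θ : ℝ) : IsFiniteMeasure (bg θ) := by
  unfold bg; infer_instance

/-- Law of an `n × p` matrix with i.i.d. `BG(θ)` entries. -/
def bgMatrix (θ : ℝ) (n p : ℕ) : Measure (Fin n → Fin p → ℝ) :=
  Measure.pi fun _ => Measure.pi fun _ => bg θ

/-- Law of a vector in `ℝ^n` with i.i.d. `BG(θ)` entries. -/
def bgVec (θ : ℝ) (n : ℕ) : Measure (Fin n → ℝ) :=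
  Measure.pi fun _ => bg θ

/-- The smooth sparsity surrogate `h_μ(z) = μ log cosh (z/μ)`. -/
def hmu (μ z : ℝ) : ℝ := μ * Real.log (Real.cosh (z / μ))

/-- Reparametrization `q(w) = (w, √(1-‖w‖²))` with `w` in the unit ball of `ℝ^{n-1}`. -/
def qmap (n : ℕ) (w : EuclideanSpace ℝ (Fin (n - 1))) : Fin n → ℝ :=
  fun i => if h : (i : ℕ) < n - 1 then w ⟨i, h⟩ else Real.sqrt (1 - ‖w‖ ^ 2)

/-- `f(q; Y) = (1/p) ∑ₖ h_μ(qᵀ yₖ)`. -/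
def ffun (n p : ℕ) (μ : ℝ) (Y : Matrix (Fin n) (Fin p) ℝ)
    (q : EuclideanSpace ℝ (Fin n)) : ℝ :=
  (p : ℝ)⁻¹ * ∑ k : Fin p, hmu μ (∑ i : Fin n, q i * Y i k)

/-- `g(w; Y) = f(q(w); Y)`. -/
def gfun (n p : ℕ) (μ : ℝ) (Y : Matrix (Fin n) (Fin p) ℝ)
    (w : EuclideanSpace ℝ (Fin (n - 1))) : ℝ :=
  (p : ℝ)⁻¹ * ∑ k : Fin p, hmu μ (∑ i : Fin n, qmap n w i * Y i k)

/-- Gradient `∇g(w; Y)` in `w`. -/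
def gradg (n p : ℕ) (μ : ℝ) (Y : Matrix (Fin n) (Fin p) ℝ)
    (w : EuclideanSpace ℝ (Fin (n - 1))) : EuclideanSpace ℝ (Fin (n - 1)) :=
  gradient (gfun n p μ Y) w

/-- Hessian `∇²g(w; Y)` in `w`, as a continuous linear map. -/
def hessg (n p : ℕ) (μ : ℝ) (Y : Matrix (Fin n) (Fin p) ℝ)
    (w : EuclideanSpace ℝ (Fin (n - 1))) :
    EuclideanSpace ℝ (Fin (n - 1)) →L[ℝ] EuclideanSpace ℝ (Fin (n - 1)) :=
  fderiv ℝ (gradg n p μ Y) w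

/-- The set `Γ = {w : ‖w‖ < √((4n-1)/(4n))}`. -/
def GammaSet (n : ℕ) : Set (EuclideanSpace ℝ (Fin (n - 1))) :=
  {w | ‖w‖ < Real.sqrt ((4 * (n : ℝ) - 1) / (4 * n))}

/-- Spectral (`ℓ²→ℓ²` operator) norm of а matrix. -/
def specNorm {m k : ℕ} (M : Matrix (Fin m) (Fin k) ℝ) : ℝ :=
  ‖LinearMap.toContinuousLinearMap (Matrix.toEuclideanLin M)‖

/-- Largest magnitude of an entry of a matrix. -/
def Minf {m k : ℕ} (M : Matrix (Fin m) (Fin k) ℝ) : ℝ := ⨆ i, ⨆ j, |M i j|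

/-- Condition number: ratio of largest to smallest singular value. -/
def kappa {n : ℕ} (s : Fin n → ℝ) : ℝ := (⨆ i, s i) / (⨅ i, s i)

/-- Signed standard basis vectors `{± e_i}` of `ℝ^n`. -/
def SignedBasis (n : ℕ) : Set (EuclideanSpace ℝ (Fin n)) :=
  {b | ∃ i : Fin n, b = EuclideanSpace.single i (1 : ℝ) ∨ b = -EuclideanSpace.single i (1 : ℝ)}

/-- Set of local minimizers of `f(·; Y)` over the unit sphere `S^{n-1}`. -/
def LocalMins (n p : ℕ) (μ : ℝ) (Y : Matrix (Fin n) (Fin p) ℝ) :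
    Set (EuclideanSpace ℝ (Fin n)) :=
  {q | q ∈ Metric.sphere (0 : EuclideanSpace ℝ (Fin n)) 1 ∧
       IsLocalMinOn (ffun n p μ Y) (Metric.sphere (0 : EuclideanSpace ℝ (Fin n)) 1) q}

/-- Expected objective `E_x[h_μ(q(w)ᵀ x)]` for `x` with i.i.d. `BG(θ)` entries. -/
def Gexp (n : ℕ) (θ μ : ℝ) (w : EuclideanSpace ℝ (Fin (n - 1))) : ℝ :=
  ∫ x, hmu μ (∑ i : Fin n, qmap n w i * x i) ∂(bgVec θ n)

/-- The second-order remainder `eʸ - 1 - y` of the exponential. -/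
def expRem (y : ℝ) : ℝ := Real.exp y - 1 - y

lemma expRem_nonneg (y : ℝ) : 0 ≤ expRem y := by
  have := Real.add_one_le_exp y
  unfold expRem; linarith

lemma continuous_expRem : Continuous expRem := by
  unfold expRem; fun_prop

lemma expRem_le_expRem {x y : ℝ} (hx : 0 ≤ x) (hxy : x ≤ y) : expRem x ≤ expRem y := by
  have h1 := Real.add_one_le_exp (y - x)
  have h2 : Real.exp y = Real.exp x * Real.exp (y - x) := by
    rw [← Real.exp_add]; ring_nf
  have h3 := Real.one_le_exp hx
  unfold expRem
  rw [h2]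
  nlinarith

lemma expRem_le_expRem_abs (y : ℝ) : expRem y ≤ expRem |y| := by
  rcases le_total 0 y with h | h
  · rw [abs_of_nonneg h]
  · rw [abs_of_nonpos h]
    have h1 : -y ≤ Real.sinh (-y) := Real.self_le_sinh_iff.2 (by linarith)
    rw [Real.sinh_eq, neg_neg] at h1
    unfold expRem
    linarith

lemma exp_le_two_mul_expRem_add (y : ℝ) : Real.exp y ≤ 2 * expRem y + 8 := by
  have h1 := Real.add_one_le_exp (y - Real.log 2)
  rw [Real.exp_sub, Real.exp_log two_pos] at h1
  have h2 := Real.log_two_lt_d9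
  unfold expRem
  linarith

section Bernstein

variable {Ω : Type*} [MeasurableSpace Ω] {P : Measure Ω}

/-- `BernsteinCond P Y R` says that the exponential remainder of `Y` under `P` is controlled as in
Bernstein's moment condition with `σ = R`. -/
def BernsteinCond (P : Measure Ω) (Y : Ω → ℝ) (R : ℝ) : Prop :=
  ∀ l : ℝ, 0 < l → l * R < 1 →
    ∫⁻ x, ENNReal.ofReal (expRem (l * Y x)) ∂P ≤
      ENNReal.ofReal ((l * R) ^ 2 / (2 * (1 - l * R)))

lemma BernsteinCond.integrable_expRem {Y : Ω → ℝ} {R : ℝ} (hY : Measurable Y)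
    (h : BernsteinCond P Y R) {l : ℝ} (hl : 0 < l) (hlR : l * R < 1) :
    Integrable (fun x => expRem (l * Y x)) P := by
  refine ⟨(continuous_expRem.measurable.comp (hY.const_mul l)).aestronglyMeasurable, ?_⟩
  rw [hasFiniteIntegral_iff_ofReal (ae_of_all _ fun x => expRem_nonneg _)]
  exact (h l hl hlR).trans_lt ENNReal.ofReal_lt_top

variable [IsProbabilityMeasure P]

lemma BernsteinCond.integrable_exp_abs {Y : Ω → ℝ} {R : ℝ} (hY : Measurable Y)
    (h : BernsteinCond P Y R) {l : ℝ} (hl : 0 < l) (hlR : l * R < 1) :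
    Integrable (fun x => Real.exp (l * Y x)) P := by
  refine (((h.integrable_expRem hY hl hlR).const_mul 2).add (integrable_const (8 : ℝ))).mono'
    (by fun_prop) (ae_of_all _ fun x => ?_)
  rw [Real.norm_of_nonneg (Real.exp_pos _).le]
  exact exp_le_two_mul_expRem_add _

lemma BernsteinCond.integrable {φ Y : Ω → ℝ} {R : ℝ} (hφ : Measurable φ) (hY : Measurable Y)
    (hφY : ∀ x, |φ x| ≤ Y x) (h : BernsteinCond P Y R) {l : ℝ} (hl : 0 < l) (hlR : l * R < 1) :
    Integrable φ P := by
  refine ((h.integrable_exp_abs hY hl hlR).const_mul l⁻¹).mono' hφ.aestronglyMeasurable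
    (ae_of_all _ fun x => ?_)
  have h1 := Real.add_one_le_exp (l * Y x)
  rw [Real.norm_eq_abs, inv_mul_eq_div, le_div_iff₀ hl]
  nlinarith [hφY x]

lemma BernsteinCond.integrable_exp {φ Y : Ω → ℝ} {R : ℝ} (hφ : Measurable φ) (hY : Measurable Y)
    (hφY : ∀ x, |φ x| ≤ Y x) (h : BernsteinCond P Y R) {l : ℝ} (hl : 0 < l) (hlR : l * R < 1) :
    Integrable (fun x => Real.exp (l * φ x)) P := by
  refine (h.integrable_exp_abs hY hl hlR).mono' (by fun_prop) (ae_of_all _ fun x => ?_)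
  rw [Real.norm_of_nonneg (Real.exp_pos _).le, Real.exp_le_exp]
  exact mul_le_mul_of_nonneg_left ((le_abs_self _).trans (hφY x)) hl.le

lemma BernsteinCond.integral_exp_le {φ Y : Ω → ℝ} {R : ℝ} (hφ : Measurable φ) (hY : Measurable Y)
    (hφY : ∀ x, |φ x| ≤ Y x) (h : BernsteinCond P Y R) {l : ℝ} (hl : 0 < l) (hlR : l * R < 1) :
    ∫ x, Real.exp (l * φ x) ∂P ≤
      Real.exp (l * ∫ x, φ x ∂P + (l * R) ^ 2 / (2 * (1 - l * R))) := by
  have hint := h.integrable hφ hY hφY hl hlR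
  have hrem := h.integrable_expRem hY hl hlR
  have hle : ∀ x, Real.exp (l * φ x) ≤ expRem (l * Y x) + (1 + l * φ x) := fun x => by
    have h1 : expRem (l * φ x) ≤ expRem (l * Y x) :=
      (expRem_le_expRem_abs _).trans (expRem_le_expRem (abs_nonneg _) (by
        rw [abs_mul, abs_of_pos hl]; exact mul_le_mul_of_nonneg_left (hφY x) hl.le))
    have h2 : Real.exp (l * φ x) = expRem (l * φ x) + (1 + l * φ x) := by unfold expRem; ring
    linarith
  have hI : ∫ x, expRem (l * Y x) ∂P ≤ (l * R) ^ 2 / (2 * (1 - l * R)) := by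
    rw [integral_eq_lintegral_of_nonneg_ae (ae_of_all _ fun x => expRem_nonneg _)
      hrem.aestronglyMeasurable]
    refine ENNReal.toReal_le_of_le_ofReal (div_nonneg (sq_nonneg _) (by linarith)) (h l hl hlR)
  have h1 : Integrable (fun x => 1 + l * φ x) P := (integrable_const _).add (hint.const_mul l)
  calc ∫ x, Real.exp (l * φ x) ∂P ≤ ∫ x, (expRem (l * Y x) + (1 + l * φ x)) ∂P :=
        integral_mono (h.integrable_exp hφ hY hφY hl hlR) (hrem.add h1) hle
    _ = ∫ x, expRem (l * Y x) ∂P + (1 + l * ∫ x, φ x ∂P) := by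
        rw [integral_add hrem h1, integral_add (integrable_const _) (hint.const_mul l),
          integral_const_mul]
        simp
    _ ≤ (l * ∫ x, φ x ∂P + (l * R) ^ 2 / (2 * (1 - l * R))) + 1 := by linarith
    _ ≤ _ := Real.add_one_le_exp _

/-- One-sided Bernstein inequality for sample means, in terms of uncentered moments. -/
lemma BernsteinCond.measureReal_ge_le {φ Y : Ω → ℝ} {R : ℝ} (hφ : Measurable φ)
    (hY : Measurable Y) (hφY : ∀ x, |φ x| ≤ Y x) (h : BernsteinCond P Y R) (hR : 0 < R)
    {p : ℕ} (hp : p ≠ 0) {s : ℝ} (hs : 0 < s) :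
    (Measure.pi fun _ : Fin p => P).real
        {X | s ≤ (p : ℝ)⁻¹ * ∑ k, φ (X k) - ∫ x, φ x ∂P} ≤
      Real.exp (-(p * s ^ 2) / (2 * R ^ 2 + 2 * R * s)) := by
  have hp' : (0 : ℝ) < p := by positivity
  set l : ℝ := s / (R * (R + s)) with hl_def
  have hl : 0 < l := by positivity
  have hlR' : l * R = s / (R + s) := by rw [hl_def]; field_simp
  have hlR : l * R < 1 := by rw [hlR', div_lt_one (by positivity)]; linarith
  set E := ∫ x, φ x ∂P
  have hset : {X : Fin p → Ω | s ≤ (p : ℝ)⁻¹ * ∑ k, φ (X k) - E} =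
      {X | p * (s + E) ≤ ∑ k, φ (X k)} := by
    ext X
    simp only [Set.mem_ofPred_eq]
    rw [le_sub_iff_add_le, inv_mul_eq_div, le_div_iff₀' hp']
  have hexp : (fun X : Fin p → Ω => Real.exp (l * ∑ k, φ (X k))) =
      fun X => ∏ k, Real.exp (l * φ (X k)) := by
    ext X; rw [Finset.mul_sum, Real.exp_sum]
  have hint : Integrable (fun X : Fin p → Ω => Real.exp (l * ∑ k, φ (X k)))
      (Measure.pi fun _ => P) := by
    rw [hexp]
    exact Integrable.fintype_prod (f := fun (_ : Fin p) x => Real.exp (l * φ x))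
      fun _ => h.integrable_exp hφ hY hφY hl hlR
  rw [hset]
  refine (measure_ge_le_exp_mul_mgf _ hl.le hint).trans ?_
  have hmgf : mgf (fun X : Fin p → Ω => ∑ k, φ (X k)) (Measure.pi fun _ => P) l ≤
      Real.exp (l * E + (l * R) ^ 2 / (2 * (1 - l * R))) ^ p := by
    rw [mgf, hexp, integral_fintype_prod_eq_pow (ι := Fin p) (fun x => Real.exp (l * φ x)),
      Fintype.card_fin]
    exact pow_le_pow_left₀ (integral_nonneg fun x => (Real.exp_pos _).le)
      (h.integral_exp_le hφ hY hφY hl hlR) p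
  refine (mul_le_mul_of_nonneg_left hmgf (Real.exp_pos _).le).trans (le_of_eq ?_)
  have h1s : 1 - s / (R + s) = R / (R + s) := by field_simp; ring
  rw [← Real.exp_nat_mul, ← Real.exp_add, hlR', hl_def, h1s]
  congr 1
  field_simp
  ring

/-- Two-sided Bernstein inequality for sample means, in terms of uncentered moments. -/
lemma BernsteinCond.measure_abs_ge_le {φ Y : Ω → ℝ} {R : ℝ} (hφ : Measurable φ)
    (hY : Measurable Y) (hφY : ∀ x, |φ x| ≤ Y x) (h : BernsteinCond P Y R) (hR : 0 < R)
    {p : ℕ} (hp : p ≠ 0) {s : ℝ} (hs : 0 < s) :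
    (Measure.pi fun _ : Fin p => P)
        {X | s ≤ |(p : ℝ)⁻¹ * ∑ k, φ (X k) - ∫ x, φ x ∂P|} ≤
      ENNReal.ofReal (2 * Real.exp (-(p * s ^ 2) / (2 * R ^ 2 + 2 * R * s))) := by
  have h1 := h.measureReal_ge_le hφ hY hφY hR hp hs
  have h2 := h.measureReal_ge_le hφ.neg hY (fun x => by simpa using hφY x) hR hp hs
  have hsub : {X : Fin p → Ω | s ≤ |(p : ℝ)⁻¹ * ∑ k, φ (X k) - ∫ x, φ x ∂P|} ⊆
      {X | s ≤ (p : ℝ)⁻¹ * ∑ k, φ (X k) - ∫ x, φ x ∂P} ∪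
      {X | s ≤ (p : ℝ)⁻¹ * ∑ k, (-φ) (X k) - ∫ x, (-φ) x ∂P} := by
    intro X hX
    simp only [Set.mem_ofPred_eq, Set.mem_union, Pi.neg_apply, Finset.sum_neg_distrib,
      integral_neg] at hX ⊢
    rcases le_abs.1 hX with h | h
    · exact Or.inl h
    · right; linarith
  rw [← ENNReal.ofReal_toReal (measure_ne_top _ _)]
  refine ENNReal.ofReal_le_ofReal ?_
  refine (measureReal_mono hsub).trans ((measureReal_union_le _ _).trans ?_)
  linarith

end Bernstein

section Moments

instance bg.isProbabilityMeasure (θ : ℝ) [hθ : Fact (θ ∈ Set.Ioo (0 : ℝ) 1)] :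
    IsProbabilityMeasure (bg θ) := by
  obtain ⟨h0, h1⟩ := hθ.out
  refine ⟨?_⟩
  have h : θ.toNNReal + (1 - θ).toNNReal = 1 := by
    rw [← Real.toNNReal_add h0.le (by linarith)]; simp
  rw [← lintegral_one, bg, lintegral_add_measure, lintegral_smul_measure, lintegral_smul_measure,
    lintegral_one, lintegral_one, measure_univ, measure_univ, ← add_smul, h, one_smul]

instance bgVec.isProbabilityMeasure (θ : ℝ) [Fact (θ ∈ Set.Ioo (0 : ℝ) 1)] (n : ℕ) :
    IsProbabilityMeasure (bgVec θ n) := by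
  unfold bgVec; infer_instance

instance bgMatrix.isProbabilityMeasure (θ : ℝ) [Fact (θ ∈ Set.Ioo (0 : ℝ) 1)] (n p : ℕ) :
    IsProbabilityMeasure (bgMatrix θ n p) := by
  unfold bgMatrix; infer_instance

variable {θ : ℝ} [hθ : Fact (θ ∈ Set.Ioo (0 : ℝ) 1)]

/-- Any function whose Gaussian average dominates its value at `0` has a smaller
Bernoulli–Gaussian average. -/
lemma lintegral_bg_le {f : ℝ → ℝ≥0∞} (h : f 0 ≤ ∫⁻ x, f x ∂gaussianReal 0 1) :
    ∫⁻ x, f x ∂bg θ ≤ ∫⁻ x, f x ∂gaussianReal 0 1 := by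
  obtain ⟨h0, h1⟩ := hθ.out
  have hs : θ.toNNReal + (1 - θ).toNNReal = 1 := by
    rw [← Real.toNNReal_add h0.le (by linarith)]; simp
  rw [bg, lintegral_add_measure, lintegral_smul_measure, lintegral_smul_measure, lintegral_dirac]
  calc _ ≤ θ.toNNReal • ∫⁻ x, f x ∂gaussianReal 0 1 +
        (1 - θ).toNNReal • ∫⁻ x, f x ∂gaussianReal 0 1 := by gcongr
    _ = _ := by rw [← add_smul, hs, one_smul]

/-- Symmetrization: the Gaussian average of a midpoint-convex function along a line dominates
its value at the center. -/
lemma le_lintegral_gaussianReal {G : ℝ → ℝ≥0∞} (hG : Measurable G)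
    (hconv : ∀ a b, 2 * G a ≤ G (a + b) + G (a - b)) (a c : ℝ) :
    G a ≤ ∫⁻ x, G (a + c * x) ∂gaussianReal 0 1 := by
  have hneg : ∫⁻ x, G (a - c * x) ∂gaussianReal 0 1 = ∫⁻ x, G (a + c * x) ∂gaussianReal 0 1 := by
    conv_rhs => rw [← neg_zero (G := ℝ), ← gaussianReal_map_neg]
    rw [lintegral_map (by fun_prop) (by fun_prop)]
    simp [sub_eq_add_neg]
  have h2 : 2 * G a ≤ 2 * ∫⁻ x, G (a + c * x) ∂gaussianReal 0 1 := by
    calc 2 * G a = ∫⁻ _, 2 * G a ∂gaussianReal 0 1 := by simp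
      _ ≤ ∫⁻ x, (G (a + c * x) + G (a - c * x)) ∂gaussianReal 0 1 :=
          lintegral_mono fun x => hconv _ _
      _ = _ := by rw [lintegral_add_left (by fun_prop), hneg, two_mul]
  exact (ENNReal.mul_le_mul_iff_right two_ne_zero ENNReal.ofNat_ne_top).1 h2

/-- Midpoint-convex functions of linear forms have smaller averages under i.i.d.
Bernoulli–Gaussian entries than under i.i.d. standard Gaussian entries. -/
lemma lintegral_bgVec_le {G : ℝ → ℝ≥0∞} (hG : Measurable G)
    (hconv : ∀ a b, 2 * G a ≤ G (a + b) + G (a - b)) :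
    ∀ (n : ℕ) (c : Fin n → ℝ) (a : ℝ),
      ∫⁻ x, G (a + ∑ i, c i * x i) ∂bgVec θ n ≤
        ∫⁻ z, G (a + z) ∂gaussianReal 0 (∑ i, c i ^ 2).toNNReal := by
  intro n
  induction n with
  | zero => intro c a; simp [bgVec]
  | succ n ih =>
    intro c a
    set S := (∑ i : Fin n, c i.succ ^ 2).toNNReal with hS
    have hSsum : (∑ i, c i ^ 2).toNNReal = S + (c 0 ^ 2).toNNReal := by
      rw [Fin.sum_univ_succ, Real.toNNReal_add (sq_nonneg _)
        (Finset.sum_nonneg fun _ _ => sq_nonneg _), add_comm]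
    have hmap : gaussianReal 0 (c 0 ^ 2).toNNReal = (gaussianReal 0 1).map (c 0 * ·) := by
      rw [gaussianReal_map_const_mul, mul_zero, mul_one, Real.toNNReal_of_nonneg (sq_nonneg _)]
    have hconvol : gaussianReal 0 (∑ i, c i ^ 2).toNNReal =
        (gaussianReal 0 S).conv ((gaussianReal 0 1).map (c 0 * ·)) := by
      rw [← hmap, gaussianReal_conv_gaussianReal, hSsum, add_zero]
    calc ∫⁻ x, G (a + ∑ i, c i * x i) ∂bgVec θ (n + 1)
        = ∫⁻ y : ℝ × (Fin n → ℝ), G (a + c 0 * y.1 + ∑ i : Fin n, c i.succ * y.2 i)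
            ∂((bg θ).prod (bgVec θ n)) := by
          have h := ((measurePreserving_piFinSuccAbove (fun _ : Fin (n + 1) => bg θ) 0).symm)
          unfold bgVec
          rw [← h.lintegral_comp_emb (MeasurableEquiv.measurableEmbedding _)]
          refine lintegral_congr fun y => ?_
          simp [MeasurableEquiv.piFinSuccAbove_symm_apply, Fin.insertNthEquiv,
            Fin.sum_univ_succ, add_assoc]
      _ = ∫⁻ y, ∫⁻ x, G (a + c 0 * y + ∑ i : Fin n, c i.succ * x i) ∂bgVec θ n ∂bg θ := by
          rw [lintegral_prod _ (by fun_prop)]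
      _ ≤ ∫⁻ y, ∫⁻ z, G (a + c 0 * y + z) ∂gaussianReal 0 S ∂bg θ :=
          lintegral_mono fun y => ih (fun i => c i.succ) (a + c 0 * y)
      _ = ∫⁻ z, ∫⁻ y, G (a + c 0 * y + z) ∂bg θ ∂gaussianReal 0 S := by
          rw [lintegral_lintegral_swap (by fun_prop)]
      _ ≤ ∫⁻ z, ∫⁻ y, G (a + c 0 * y + z) ∂gaussianReal 0 1 ∂gaussianReal 0 S := by
          refine lintegral_mono fun z => lintegral_bg_le ?_
          have := le_lintegral_gaussianReal hG hconv (a + z) (c 0)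
          simpa [add_right_comm] using this
      _ = ∫⁻ z, G (a + z) ∂gaussianReal 0 (∑ i, c i ^ 2).toNNReal := by
          rw [hconvol, Measure.lintegral_conv (by fun_prop)]
          refine lintegral_congr fun z => ?_
          rw [lintegral_map (by fun_prop) (by fun_prop)]
          refine lintegral_congr fun y => ?_
          congr 1; ring

lemma two_mul_expRem_sq_le {l : ℝ} (hl : 0 < l) (a b : ℝ) :
    2 * expRem (l * a ^ 2) ≤ expRem (l * (a + b) ^ 2) + expRem (l * (a - b) ^ 2) := by
  have h1 : expRem (l * a ^ 2) ≤ expRem ((l * (a + b) ^ 2 + l * (a - b) ^ 2) / 2) :=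
    expRem_le_expRem (by positivity) (by nlinarith [mul_nonneg hl.le (sq_nonneg b)])
  refine (mul_le_mul_of_nonneg_left h1 two_pos.le).trans ?_
  generalize l * (a + b) ^ 2 = x
  generalize l * (a - b) ^ 2 = y
  have hx : Real.exp x = Real.exp (x / 2) ^ 2 := by rw [← Real.exp_nat_mul]; congr 1; norm_num; ring
  have hy : Real.exp y = Real.exp (y / 2) ^ 2 := by rw [← Real.exp_nat_mul]; congr 1; norm_num; ring
  have hxy : Real.exp ((x + y) / 2) = Real.exp (x / 2) * Real.exp (y / 2) := by
    rw [← Real.exp_add]; congr 1; ring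
  unfold expRem
  rw [hx, hy, hxy]
  nlinarith [sq_nonneg (Real.exp (x / 2) - Real.exp (y / 2))]

lemma gaussianPDFReal_mul_exp_sq {v : ℝ≥0} (hv : v ≠ 0) (l x : ℝ) :
    gaussianPDFReal 0 v x * Real.exp (l * x ^ 2) =
      (√(2 * π * v))⁻¹ * Real.exp (-((1 - 2 * l * v) / (2 * v)) * x ^ 2) := by
  have hv' : (v : ℝ) ≠ 0 := by exact_mod_cast hv
  rw [gaussianPDFReal, mul_assoc, ← Real.exp_add]
  congr 2
  field_simp
  ring

lemma integrable_exp_sq_gaussianReal {v : ℝ≥0} (hv : v ≠ 0) {l : ℝ} (hl : 2 * l * v < 1) :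
    Integrable (fun x => Real.exp (l * x ^ 2)) (gaussianReal 0 v) := by
  have hv' : (0 : ℝ) < v := by exact_mod_cast pos_iff_ne_zero.2 hv
  rw [gaussianReal_of_var_ne_zero _ hv, integrable_withDensity_iff (by fun_prop)
    (ae_of_all _ fun x => by simp [gaussianPDF])]
  simp_rw [toReal_gaussianPDF, mul_comm (Real.exp _), gaussianPDFReal_mul_exp_sq hv]
  exact (integrable_exp_neg_mul_sq (div_pos (by linarith) (by positivity))).const_mul _

lemma integral_exp_sq_gaussianReal {v : ℝ≥0} (hv : v ≠ 0) {l : ℝ} (hl : 2 * l * v < 1) :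
    ∫ x, Real.exp (l * x ^ 2) ∂gaussianReal 0 v = (√(1 - 2 * l * v))⁻¹ := by
  have hv' : (0 : ℝ) < v := by exact_mod_cast pos_iff_ne_zero.2 hv
  have h1 : 0 < 1 - 2 * l * v := by linarith
  rw [integral_gaussianReal_eq_integral_smul hv]
  simp_rw [smul_eq_mul, gaussianPDFReal_mul_exp_sq hv]
  rw [integral_const_mul, integral_gaussian, ← Real.sqrt_inv, ← Real.sqrt_inv,
    ← Real.sqrt_mul (by positivity)]
  congr 1
  field_simp

lemma integrable_sq_gaussianReal (v : ℝ≥0) : Integrable (fun x : ℝ => x ^ 2) (gaussianReal 0 v) :=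
  (memLp_id_gaussianReal' (μ := 0) (v := v) 2 (by simp)).integrable_sq

lemma integral_sq_gaussianReal (v : ℝ≥0) : ∫ x : ℝ, x ^ 2 ∂gaussianReal 0 v = v := by
  have h := variance_fun_id_gaussianReal (μ := 0) (v := v)
  rw [variance_eq_integral (by fun_prop)] at h
  simpa using h

lemma lintegral_expRem_sq_gaussianReal_le {v : ℝ≥0} (hv : v ≠ 0) {l : ℝ}
    (hl : 2 * l * v < 1) :
    ∫⁻ x, ENNReal.ofReal (expRem (l * x ^ 2)) ∂gaussianReal 0 v ≤
      ENNReal.ofReal ((2 * l * v) ^ 2 / (2 * (1 - 2 * l * v))) := by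
  have hi1 := integrable_exp_sq_gaussianReal hv hl
  have hi2 := (integrable_sq_gaussianReal v).const_mul l
  have hi3 : Integrable (fun x => Real.exp (l * x ^ 2) - 1) (gaussianReal 0 v) :=
    hi1.sub (integrable_const _)
  have hi : Integrable (fun x => expRem (l * x ^ 2)) (gaussianReal 0 v) := hi3.sub hi2
  rw [← ofReal_integral_eq_lintegral_ofReal hi (ae_of_all _ fun x => expRem_nonneg _)]
  refine ENNReal.ofReal_le_ofReal ?_
  unfold expRem
  rw [integral_sub hi3 hi2, integral_sub hi1 (integrable_const _), integral_const_mul,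
    integral_sq_gaussianReal, integral_exp_sq_gaussianReal hv hl]
  simp only [integral_const, probReal_univ, smul_eq_mul, mul_one]
  have h1 : 0 < 1 - 2 * l * v := by linarith
  set y := 2 * l * (v : ℝ) with hy
  have hlv : l * (v : ℝ) = y / 2 := by rw [hy]; ring
  rw [hlv]
  set r := √(1 - y) with hr
  have hr0 : 0 < r := Real.sqrt_pos.2 h1
  have hrr : 1 - y = r ^ 2 := (Real.sq_sqrt h1.le).symm
  have hy2 : y = 1 - r ^ 2 := by linarith
  rw [hrr, hy2]
  have : (1 - r ^ 2) ^ 2 / (2 * r ^ 2) - (r⁻¹ - 1 - (1 - r ^ 2) / 2) = (r - 1) ^ 2 / (2 * r ^ 2) := by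
    field_simp
    ring
  nlinarith [div_nonneg (sq_nonneg (r - 1)) (by positivity : 0 ≤ 2 * r ^ 2)]

/-- Squares of linear forms in Bernoulli–Gaussian variables satisfy Bernstein's condition. -/
lemma bernsteinCond_sq {n : ℕ} (c : Fin n → ℝ) (hc : 0 < ∑ i, c i ^ 2) {κ R : ℝ} (hκ : 0 < κ)
    (hR : 2 * κ * ∑ i, c i ^ 2 ≤ R) :
    BernsteinCond (bgVec θ n) (fun x => κ * (∑ i, c i * x i) ^ 2) R := by
  intro l hl hlR
  set S := ∑ i, c i ^ 2 with hS
  have hS' : ((S.toNNReal : ℝ≥0) : ℝ) = S := Real.coe_toNNReal _ hc.le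
  have hle : 2 * (l * κ) * S ≤ l * R := by nlinarith
  have hlt : 2 * (l * κ) * S < 1 := by linarith
  have hpos : 0 < 2 * (l * κ) * S := by positivity
  have h1 := lintegral_bgVec_le (θ := θ) (G := fun z => ENNReal.ofReal (expRem (l * κ * z ^ 2)))
    (by have := continuous_expRem; fun_prop) (fun a b => by
      rw [← ENNReal.ofReal_add (expRem_nonneg _) (expRem_nonneg _)]
      have := ENNReal.ofReal_le_ofReal (two_mul_expRem_sq_le (mul_pos hl hκ) a b)
      rwa [ENNReal.ofReal_mul two_pos.le, ENNReal.ofReal_ofNat] at this) n c 0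
  have h2 := lintegral_expRem_sq_gaussianReal_le (v := S.toNNReal) (l := l * κ)
    (by simpa using hc) (by rwa [hS'])
  simp only [zero_add] at h1
  simp only [← mul_assoc]
  refine h1.trans (h2.trans (ENNReal.ofReal_le_ofReal ?_))
  rw [hS']
  gcongr

end Moments

section AbsoluteMoments

lemma nonneg_of_hasDerivAt_nonneg {f f' : ℝ → ℝ} (hf : ∀ x, HasDerivAt f (f' x) x)
    (hf' : ∀ x, 0 ≤ x → 0 ≤ f' x) (h0 : f 0 = 0) {x : ℝ} (hx : 0 ≤ x) : 0 ≤ f x := by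
  have hmono : MonotoneOn f (Set.Ici 0) := by
    refine monotoneOn_of_deriv_nonneg (convex_Ici 0)
      (fun y _ => (hf y).continuousAt.continuousWithinAt)
      (fun y _ => (hf y).differentiableAt.differentiableWithinAt) fun y hy => ?_
    rw [interior_Ici] at hy
    rw [(hf y).deriv]
    exact hf' y (le_of_lt hy)
  rw [← h0]
  exact hmono Set.self_mem_Ici hx hx

lemma sinh_mul_le_mul_sinh {l x : ℝ} (hl0 : 0 ≤ l) (hl1 : l ≤ 1) (hx : 0 ≤ x) :
    Real.sinh (l * x) ≤ l * Real.sinh x := by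
  refine sub_nonneg.1 (nonneg_of_hasDerivAt_nonneg
    (f := fun x => l * Real.sinh x - Real.sinh (l * x))
    (f' := fun x => l * Real.cosh x - Real.cosh (l * x) * (l * 1)) (fun y => ?_)
    (fun y hy => ?_) (by simp) hx)
  · exact ((Real.hasDerivAt_sinh y).const_mul l).sub (((hasDerivAt_id y).const_mul l).sinh)
  · have : Real.cosh (l * y) ≤ Real.cosh y := by
      rw [Real.cosh_le_cosh, abs_of_nonneg (by positivity), abs_of_nonneg hy]
      nlinarith
    nlinarith

lemma cosh_mul_sub_one_le {l x : ℝ} (hl0 : 0 ≤ l) (hl1 : l ≤ 1) (hx : 0 ≤ x) :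
    Real.cosh (l * x) - 1 ≤ l ^ 2 * (Real.cosh x - 1) := by
  have h := nonneg_of_hasDerivAt_nonneg
    (f := fun x => l ^ 2 * (Real.cosh x - 1) - (Real.cosh (l * x) - 1))
    (f' := fun x => l ^ 2 * Real.sinh x - Real.sinh (l * x) * (l * 1)) (fun y => ?_)
    (fun y hy => ?_) (by simp) hx
  · exact sub_nonneg.1 h
  · exact (((Real.hasDerivAt_cosh y).sub_const 1).const_mul (l ^ 2)).sub
      ((((hasDerivAt_id y).const_mul l).cosh).sub_const 1)
  · nlinarith [sinh_mul_le_mul_sinh hl0 hl1 hy]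

lemma sinh_mul_sub_le {l x : ℝ} (hl0 : 0 ≤ l) (hl1 : l ≤ 1) (hx : 0 ≤ x) :
    Real.sinh (l * x) - l * x ≤ l ^ 3 * (Real.sinh x - x) := by
  have h := nonneg_of_hasDerivAt_nonneg
    (f := fun x => l ^ 3 * (Real.sinh x - x) - (Real.sinh (l * x) - l * x))
    (f' := fun x => l ^ 3 * (Real.cosh x - 1) - (Real.cosh (l * x) * (l * 1) - l * 1))
    (fun y => ?_) (fun y hy => ?_) (by simp) hx
  · exact sub_nonneg.1 h
  · exact (((Real.hasDerivAt_sinh y).sub (hasDerivAt_id y)).const_mul (l ^ 3)).sub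
      ((((hasDerivAt_id y).const_mul l).sinh).sub ((hasDerivAt_id y).const_mul l))
  · nlinarith [cosh_mul_sub_one_le hl0 hl1 hy]

lemma sinh_sub_self_le {x : ℝ} (hx : 0 ≤ x) :
    Real.sinh x - x ≤ (Real.cosh (2 * x) - 1) / 13 := by
  have h := nonneg_of_hasDerivAt_nonneg
    (f := fun x => (Real.cosh (2 * x) - 1) / 13 - (Real.sinh x - x))
    (f' := fun x => (Real.sinh (2 * x) * (2 * 1)) / 13 - (Real.cosh x - 1))
    (fun y => ?_) (fun y hy => ?_) (by simp) hx
  · exact sub_nonneg.1 h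
  · exact (((((hasDerivAt_id y).const_mul 2).cosh).sub_const 1).div_const 13).sub
      ((Real.hasDerivAt_sinh y).sub (hasDerivAt_id y))
  · have hs : 0 ≤ Real.sinh y := Real.sinh_nonneg_iff.2 hy
    have hc : 1 ≤ Real.cosh y := Real.one_le_cosh y
    have hsq := Real.cosh_sq y
    rw [Real.sinh_two_mul]
    set s := Real.sinh y
    set c := Real.cosh y
    have hcs : 7 / 10 * (1 + s) ≤ c := by
      by_contra hlt
      rw [not_le] at hlt
      nlinarith [sq_nonneg (1 - s)]
    have key : 13 * s ≤ 4 * c * (c + 1) := by nlinarith [sq_nonneg (s - 51 / 40)]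
    have h2 : 13 * (c - 1) * (c + 1) ≤ 4 * s * c * (c + 1) := by nlinarith
    have h3 : 13 * (c - 1) ≤ 4 * s * c := le_of_mul_le_mul_right h2 (by linarith)
    linarith

lemma expRem_mul_abs_le {l : ℝ} (hl0 : 0 ≤ l) (hl1 : l ≤ 1) (x : ℝ) :
    expRem (l * |x|) ≤ (Real.cosh (l * x) - 1) + l ^ 3 * ((Real.cosh (2 * x) - 1) / 13) := by
  have h1 : Real.exp (l * |x|) = Real.cosh (l * x) + Real.sinh (l * |x|) := by
    rw [← Real.cosh_abs (l * x), abs_mul, abs_of_nonneg hl0, Real.cosh_add_sinh]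
  have h2 := sinh_mul_sub_le hl0 hl1 (abs_nonneg x)
  have h3 := sinh_sub_self_le (abs_nonneg x)
  rw [← Real.cosh_abs (2 * x), abs_mul, abs_of_pos (two_pos : (0 : ℝ) < 2)]
  unfold expRem
  rw [h1]
  nlinarith [pow_nonneg hl0 3]

lemma integrable_cosh_gaussianReal (l : ℝ) :
    Integrable (fun x => Real.cosh (l * x)) (gaussianReal 0 1) := by
  simp_rw [Real.cosh_eq, ← neg_mul]
  exact ((integrable_exp_mul_gaussianReal l).add (integrable_exp_mul_gaussianReal (-l))).div_const 2

lemma integral_cosh_gaussianReal (l : ℝ) :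
    ∫ x, Real.cosh (l * x) ∂gaussianReal 0 1 = Real.exp (l ^ 2 / 2) := by
  have h : ∀ t : ℝ, ∫ x, Real.exp (t * x) ∂gaussianReal 0 1 = Real.exp (t ^ 2 / 2) := fun t => by
    have := congrFun (mgf_id_gaussianReal (μ := 0) (v := 1)) t
    simpa [mgf] using this
  simp_rw [Real.cosh_eq, ← neg_mul]
  rw [integral_div, integral_add (integrable_exp_mul_gaussianReal l)
    (integrable_exp_mul_gaussianReal (-l)), h, h]
  ring_nf

lemma lintegral_expRem_abs_gaussianReal_le {l : ℝ} (hl0 : 0 < l) (hl1 : l < 1) :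
    ∫⁻ x, ENNReal.ofReal (expRem (l * |x|)) ∂gaussianReal 0 1 ≤
      ENNReal.ofReal (l ^ 2 / (2 * (1 - l))) := by
  have hi1 : Integrable (fun x => Real.cosh (l * x) - 1) (gaussianReal 0 1) :=
    (integrable_cosh_gaussianReal l).sub (integrable_const _)
  have hi2 : Integrable (fun x => l ^ 3 * ((Real.cosh (2 * x) - 1) / 13)) (gaussianReal 0 1) :=
    (((integrable_cosh_gaussianReal 2).sub (integrable_const _)).div_const 13).const_mul _
  have hi : Integrable (fun x => (Real.cosh (l * x) - 1) + l ^ 3 * ((Real.cosh (2 * x) - 1) / 13))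
      (gaussianReal 0 1) := hi1.add hi2
  refine (lintegral_mono fun x => ENNReal.ofReal_le_ofReal
    (expRem_mul_abs_le hl0.le hl1.le x)).trans ?_
  rw [← ofReal_integral_eq_lintegral_ofReal hi (ae_of_all _ fun x =>
    (expRem_nonneg _).trans (expRem_mul_abs_le hl0.le hl1.le x))]
  refine ENNReal.ofReal_le_ofReal ?_
  rw [integral_add hi1 hi2, integral_const_mul, integral_div,
    integral_sub (integrable_cosh_gaussianReal l) (integrable_const _),
    integral_sub (integrable_cosh_gaussianReal 2) (integrable_const _),
    integral_cosh_gaussianReal, integral_cosh_gaussianReal]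
  simp only [integral_const, probReal_univ, smul_eq_mul, mul_one]
  have he2 : Real.exp (2 ^ 2 / 2) ≤ 7.5 := by
    have h1 := Real.exp_one_lt_d9
    have h2 : Real.exp (2 ^ 2 / 2) = Real.exp 1 ^ 2 := by
      rw [← Real.exp_nat_mul]; norm_num
    rw [h2]
    nlinarith [Real.exp_pos 1]
  have he1 : Real.exp (l ^ 2 / 2) ≤ 1 + l ^ 2 / 2 + (l ^ 2 / 2) ^ 2 := by
    have hz : |l ^ 2 / 2| ≤ 1 := by
      rw [abs_of_nonneg (by positivity)]; nlinarith
    have := (abs_le.1 (Real.abs_exp_sub_one_sub_id_le hz)).2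
    linarith
  have h3 : l ^ 3 * ((Real.exp (2 ^ 2 / 2) - 1) / 13) ≤ l ^ 3 * (1 / 2) :=
    mul_le_mul_of_nonneg_left (by linarith) (by positivity)
  rw [le_div_iff₀ (by linarith)]
  have h4 : Real.exp (l ^ 2 / 2) - 1 + l ^ 3 * ((Real.exp (2 ^ 2 / 2) - 1) / 13) ≤
      l ^ 2 / 2 + l ^ 4 / 4 + l ^ 3 / 2 := by linarith
  have h5 := mul_le_mul_of_nonneg_right h4 (by linarith : 0 ≤ 2 * (1 - l))
  refine h5.trans ?_
  nlinarith [pow_pos hl0 4, pow_pos hl0 5]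

/-- Scaled coordinates of a Bernoulli–Gaussian vector satisfy Bernstein's condition. -/
lemma bernsteinCond_abs {θ : ℝ} [hθ : Fact (θ ∈ Set.Ioo (0 : ℝ) 1)] {n : ℕ} (i : Fin n) {R : ℝ}
    (hR : 0 < R) : BernsteinCond (bgVec θ n) (fun x => R * |x i|) R := by
  intro l hl hlR
  have hmeas : Measurable fun y : ℝ => ENNReal.ofReal (expRem (l * R * |y|)) := by
    have := continuous_expRem.measurable
    fun_prop
  have hev : MeasurePreserving (Function.eval i) (bgVec θ n) (bg θ) :=
    measurePreserving_eval (fun _ : Fin n => bg θ) i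
  simp only [← mul_assoc]
  have h1 := hev.lintegral_comp hmeas
  simp only [Function.eval] at h1
  rw [h1]
  refine (lintegral_bg_le ?_).trans (lintegral_expRem_abs_gaussianReal_le (by positivity) hlR)
  simp [expRem]

end AbsoluteMoments

section Hessian

variable {n p : ℕ} {μ : ℝ}

/-- The vector `(w, 0)` in `ℝⁿ`. -/
def padZero (n : ℕ) (w : EuclideanSpace ℝ (Fin (n - 1))) (i : Fin n) : ℝ :=
  if h : (i : ℕ) < n - 1 then w ⟨i, h⟩ else 0

/-- The last index of `Fin n`. -/
def lastIdx (n : ℕ) (hn : 0 < n) : Fin n := ⟨n - 1, Nat.sub_lt hn one_pos⟩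

lemma padZero_lastIdx (hn : 0 < n) (w : EuclideanSpace ℝ (Fin (n - 1))) :
    padZero n w (lastIdx n hn) = 0 := by
  simp [padZero, lastIdx]

lemma padZero_smul (a : ℝ) (w : EuclideanSpace ℝ (Fin (n - 1))) (i : Fin n) :
    padZero n (a • w) i = a * padZero n w i := by
  unfold padZero; split_ifs <;> simp

lemma sum_padZero_sq (hn : 0 < n) (w : EuclideanSpace ℝ (Fin (n - 1))) :
    ∑ i, padZero n w i ^ 2 = ‖w‖ ^ 2 := by
  obtain ⟨m, rfl⟩ : ∃ m, n = m + 1 := ⟨n - 1, by omega⟩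
  rw [EuclideanSpace.norm_sq_eq, Fin.sum_univ_castSucc]
  simp [padZero]

lemma qmap_eq (hn : 0 < n) (w : EuclideanSpace ℝ (Fin (n - 1))) (i : Fin n) :
    qmap n w i = padZero n w i + if i = lastIdx n hn then √(1 - ‖w‖ ^ 2) else 0 := by
  have hi := i.isLt
  by_cases h : (i : ℕ) < n - 1
  · have : i ≠ lastIdx n hn := fun h' => by simp [h', lastIdx] at h
    simp [qmap, padZero, h, this]
  · have : i = lastIdx n hn := Fin.ext (by simp only [lastIdx]; omega)
    simp [qmap, padZero, lastIdx, this]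

lemma sum_qmap_mul (hn : 0 < n) (w : EuclideanSpace ℝ (Fin (n - 1))) (x : Fin n → ℝ) :
    ∑ i, qmap n w i * x i =
      ∑ i, padZero n w i * x i + √(1 - ‖w‖ ^ 2) * x (lastIdx n hn) := by
  simp [qmap_eq hn, add_mul, Finset.sum_add_distrib]

lemma hasDerivAt_tanh (x : ℝ) : HasDerivAt Real.tanh ((Real.cosh x ^ 2)⁻¹) x := by
  have h := (Real.hasDerivAt_sinh x).div (Real.hasDerivAt_cosh x) (Real.cosh_pos x).ne'
  have h1 : Real.tanh = Real.sinh / Real.cosh := by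
    ext y; exact Real.tanh_eq_sinh_div_cosh y
  rw [h1]
  refine h.congr_deriv ?_
  have := Real.cosh_sq x
  rw [← one_div]
  congr 1
  linarith

lemma hasDerivAt_hmu (hμ : μ ≠ 0) (z : ℝ) : HasDerivAt (hmu μ) (Real.tanh (z / μ)) z := by
  have h := ((((hasDerivAt_id z).div_const μ).cosh).log (Real.cosh_pos _).ne').const_mul μ
  refine h.congr_deriv ?_
  rw [Real.tanh_eq_sinh_div_cosh]
  simp only [id]
  field_simp

lemma contDiffAt_gfun (Y : Matrix (Fin n) (Fin p) ℝ) {w : EuclideanSpace ℝ (Fin (n - 1))}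
    (hw : ‖w‖ < 1) : ContDiffAt ℝ 2 (gfun n p μ Y) w := by
  unfold gfun hmu
  have hq : ∀ i, ContDiffAt ℝ 2 (fun w => qmap n w i) w := fun i => by
    unfold qmap
    split_ifs with h
    · exact contDiffAt_piLp_apply 2
    · refine ContDiffAt.sqrt (contDiffAt_const.sub (contDiff_norm_sq ℝ).contDiffAt) ?_
      nlinarith [norm_nonneg w]
  refine contDiffAt_const.mul (ContDiffAt.sum fun k _ => contDiffAt_const.mul ?_)
  refine ContDiffAt.log (Real.contDiff_cosh.contDiffAt.comp w
    ((ContDiffAt.sum fun i _ => (hq i).mul contDiffAt_const).div_const μ)) (Real.cosh_pos _).ne'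

/-- Derivative of `√(1 - a² r²)` in `a`. -/
lemma hasDerivAt_sqrt_one_sub {a r : ℝ} (h : 0 < 1 - a ^ 2 * r ^ 2) :
    HasDerivAt (fun a : ℝ => √(1 - a ^ 2 * r ^ 2)) (-(a * r ^ 2 / √(1 - a ^ 2 * r ^ 2))) a := by
  have h1 : HasDerivAt (fun a : ℝ => 1 - a ^ 2 * r ^ 2) (-(2 * a * r ^ 2)) a := by
    have := (((hasDerivAt_id a).pow 2).mul_const (r ^ 2)).const_sub 1
    simpa using this
  refine (h1.sqrt h.ne').congr_deriv ?_
  field_simp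

lemma hasDerivAt_mul_div_sqrt {r : ℝ} (h : 0 < 1 - r ^ 2) :
    HasDerivAt (fun a : ℝ => -(a * r ^ 2 / √(1 - a ^ 2 * r ^ 2)))
      (-(r ^ 2 / √(1 - r ^ 2) ^ 3)) 1 := by
  have h1 := hasDerivAt_sqrt_one_sub (a := 1) (r := r) (by simpa using h)
  have h0 : 0 < √(1 - r ^ 2) := Real.sqrt_pos.2 h
  have h2 := ((((hasDerivAt_id (1 : ℝ)).mul_const (r ^ 2)).div h1 (by simpa using h0.ne'))).neg
  refine h2.congr_deriv ?_
  have hsq : √(1 - r ^ 2) ^ 2 = 1 - r ^ 2 := Real.sq_sqrt h.le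
  simp only [one_pow, one_mul, id]
  field_simp
  rw [hsq]
  ring

/-- The linear form `⟨q(w), x⟩` differentiated along the ray through `w`. -/
def rayDeriv (n : ℕ) (hn : 0 < n) (w : EuclideanSpace ℝ (Fin (n - 1))) (x : Fin n → ℝ) (a : ℝ) :
    ℝ :=
  ∑ i, padZero n w i * x i + -(a * ‖w‖ ^ 2 / √(1 - a ^ 2 * ‖w‖ ^ 2)) * x (lastIdx n hn)

lemma hasDerivAt_ray (hn : 0 < n) (w : EuclideanSpace ℝ (Fin (n - 1))) (x : Fin n → ℝ) {a : ℝ}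
    (h : 0 < 1 - a ^ 2 * ‖w‖ ^ 2) :
    HasDerivAt (fun a : ℝ => ∑ i, qmap n (a • w) i * x i) (rayDeriv n hn w x a) a := by
  have h1 : (fun a : ℝ => ∑ i, qmap n (a • w) i * x i) = fun a =>
      a * (∑ i, padZero n w i * x i) + √(1 - a ^ 2 * ‖w‖ ^ 2) * x (lastIdx n hn) := by
    ext a
    rw [sum_qmap_mul hn, Finset.mul_sum, norm_smul, mul_pow, Real.norm_eq_abs, sq_abs]
    simp only [padZero_smul, mul_assoc]
  rw [h1]
  refine (((hasDerivAt_id a).mul_const _).add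
    ((hasDerivAt_sqrt_one_sub h).mul_const _)).congr_deriv ?_
  rw [one_mul]; rfl

lemma hasDerivAt_rayDeriv (hn : 0 < n) (w : EuclideanSpace ℝ (Fin (n - 1))) (x : Fin n → ℝ)
    (h : 0 < 1 - ‖w‖ ^ 2) :
    HasDerivAt (rayDeriv n hn w x)
      (-(‖w‖ ^ 2 / √(1 - ‖w‖ ^ 2) ^ 3) * x (lastIdx n hn)) 1 :=
  ((hasDerivAt_mul_div_sqrt h).mul_const _).const_add _

lemma one_sub_sq_pos {w : EuclideanSpace ℝ (Fin (n - 1))} (hw : ‖w‖ < 1) : 0 < 1 - ‖w‖ ^ 2 := by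
  nlinarith [norm_nonneg w]

/-- Directional derivative of `g` along the ray through `w`. -/
lemma fderiv_gfun_ray (hn : 0 < n) (hμ : μ ≠ 0) (Y : Matrix (Fin n) (Fin p) ℝ)
    (w : EuclideanSpace ℝ (Fin (n - 1))) {a : ℝ} (h : ‖a • w‖ < 1) :
    fderiv ℝ (gfun n p μ Y) (a • w) w =
      (p : ℝ)⁻¹ * ∑ k, Real.tanh ((∑ i, qmap n (a • w) i * Y i k) / μ) *
        rayDeriv n hn w (fun i => Y i k) a := by
  have h1 : HasDerivAt (fun a : ℝ => a • w) w a := by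
    simpa using (hasDerivAt_id a).smul_const w
  have h2 := ((contDiffAt_gfun (μ := μ) Y h).differentiableAt
    (by norm_num)).hasFDerivAt.comp_hasDerivAt a h1
  refine h2.unique ?_
  have hpos : 0 < 1 - a ^ 2 * ‖w‖ ^ 2 := by
    have := one_sub_sq_pos h
    rwa [norm_smul, mul_pow, Real.norm_eq_abs, sq_abs] at this
  exact (HasDerivAt.fun_sum fun k _ => (hasDerivAt_hmu hμ _).comp a
    (hasDerivAt_ray hn w (fun i => Y i k) hpos)).const_mul _

/-- The Hessian quadratic form in the direction `w`. -/
lemma inner_hessg (hn : 0 < n) (hμ : μ ≠ 0) (Y : Matrix (Fin n) (Fin p) ℝ)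
    {w : EuclideanSpace ℝ (Fin (n - 1))} (hw : ‖w‖ < 1) :
    ⟪hessg n p μ Y w w, w⟫ =
      (p : ℝ)⁻¹ * ∑ k, (μ⁻¹ * (Real.cosh ((∑ i, qmap n w i * Y i k) / μ) ^ 2)⁻¹ *
          rayDeriv n hn w (fun i => Y i k) 1 ^ 2 -
        Real.tanh ((∑ i, qmap n w i * Y i k) / μ) *
          (‖w‖ ^ 2 / √(1 - ‖w‖ ^ 2) ^ 3 * Y (lastIdx n hn) k)) := by
  have hpos := one_sub_sq_pos hw
  have hgrad : DifferentiableAt ℝ (gradg n p μ Y) w := by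
    have h1 : DifferentiableAt ℝ (fderiv ℝ (gfun n p μ Y)) w :=
      ((contDiffAt_gfun (μ := μ) Y hw).fderiv_right (m := 1) (by norm_num)).differentiableAt
        (by norm_num)
    exact (InnerProductSpace.toDual ℝ
      (EuclideanSpace ℝ (Fin (n - 1)))).symm.toContinuousLinearEquiv.differentiableAt.comp w h1
  have h1 : HasDerivAt (fun a : ℝ => a • w) w 1 := by
    simpa using (hasDerivAt_id (1 : ℝ)).smul_const w
  have hgrad' : HasFDerivAt (gradg n p μ Y) (hessg n p μ Y w) ((1 : ℝ) • w) := by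
    rw [one_smul]; exact hgrad.hasFDerivAt
  have h2 : HasDerivAt (fun a : ℝ => ⟪gradg n p μ Y (a • w), w⟫) ⟪hessg n p μ Y w w, w⟫ 1 := by
    have := (hgrad'.comp_hasDerivAt (1 : ℝ) h1).inner ℝ (hasDerivAt_const (1 : ℝ) w)
    simpa using this
  have hev : (fun a : ℝ => ⟪gradg n p μ Y (a • w), w⟫) =ᶠ[nhds 1] fun a =>
      (p : ℝ)⁻¹ * ∑ k, Real.tanh ((∑ i, qmap n (a • w) i * Y i k) / μ) *
        rayDeriv n hn w (fun i => Y i k) a := by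
    have hopen : ∀ᶠ a : ℝ in nhds 1, ‖a • w‖ < 1 := by
      have hc : ContinuousAt (fun a : ℝ => ‖a • w‖) 1 := by fun_prop
      exact hc.eventually_lt continuousAt_const (by simpa using hw)
    filter_upwards [hopen] with a ha
    rw [gradg, inner_gradient_left, fderiv_gfun_ray hn hμ Y w ha]
  refine (h2.congr_of_eventuallyEq hev.symm).unique ?_
  refine HasDerivAt.const_mul _ (HasDerivAt.fun_sum fun k _ => ?_)
  have h3 := ((hasDerivAt_tanh _).comp (1 : ℝ) ((hasDerivAt_ray hn w (fun i => Y i k) (a := 1)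
    (by simpa using hpos)).div_const μ)).mul (hasDerivAt_rayDeriv hn w (fun i => Y i k) hpos)
  refine h3.congr_deriv ?_
  simp only [one_smul, Function.comp]
  ring

end Hessian

section Concentration

variable {θ : ℝ} [hθ : Fact (θ ∈ Set.Ioo (0 : ℝ) 1)]

/-- The columns of a Bernoulli–Gaussian matrix are i.i.d. Bernoulli–Gaussian vectors. -/
lemma measurePreserving_columns (n p : ℕ) :
    MeasurePreserving (fun (X : Fin n → Fin p → ℝ) k i => X i k) (bgMatrix θ n p)
      (Measure.pi fun _ : Fin p => bgVec θ n) := by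
  refine ⟨by fun_prop, ?_⟩
  have h1 := Measure.infinitePi_map_curry (fun (_ : Fin n) (_ : Fin p) => bg θ)
  have h2 := Measure.infinitePi_map_curry (fun (_ : Fin p) (_ : Fin n) => bg θ)
  have h3 := Measure.infinitePi_map_piCongrLeft (fun _ : Fin p × Fin n => bg θ)
    (Equiv.prodComm (Fin n) (Fin p))
  simp only [Measure.infinitePi_eq_pi] at h1 h2 h3
  unfold bgMatrix bgVec
  rw [← h1, ← h2, ← h3, Measure.map_map (by fun_prop) (by fun_prop),
    Measure.map_map (by fun_prop) (by fun_prop)]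
  congr 1

lemma integral_mean_pi {Ω : Type*} [MeasurableSpace Ω] {P : Measure Ω} [IsProbabilityMeasure P]
    {φ : Ω → ℝ} (hφ : Integrable φ P) {p : ℕ} (hp : p ≠ 0) :
    Integrable (fun X : Fin p → Ω => (p : ℝ)⁻¹ * ∑ k, φ (X k)) (Measure.pi fun _ => P) ∧
      ∫ X : Fin p → Ω, (p : ℝ)⁻¹ * ∑ k, φ (X k) ∂(Measure.pi fun _ => P) = ∫ x, φ x ∂P := by
  have hk : ∀ k : Fin p, Integrable (fun X : Fin p → Ω => φ (X k)) (Measure.pi fun _ => P) :=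
    fun k => (measurePreserving_eval (fun _ : Fin p => P) k).integrable_comp_of_integrable hφ
  refine ⟨(integrable_finsetSum _ fun k _ => hk k).const_mul _, ?_⟩
  rw [integral_const_mul, integral_finsetSum _ fun k _ => hk k]
  have : ∀ k : Fin p, ∫ X : Fin p → Ω, φ (X k) ∂(Measure.pi fun _ => P) = ∫ x, φ x ∂P :=
    fun k => integral_comp_eval (μ := fun _ : Fin p => P) hφ.aestronglyMeasurable
  simp only [this, Finset.sum_const, Finset.card_univ, Fintype.card_fin, nsmul_eq_mul]
  field_simp

/-- Concentration of the sum of two sample means, both satisfying Bernstein's condition. -/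
lemma measure_abs_add_ge_le {Ω : Type*} [MeasurableSpace Ω] {P : Measure Ω}
    [IsProbabilityMeasure P] {φ ψ Y Z : Ω → ℝ} {R : ℝ} (hφ : Measurable φ) (hψ : Measurable ψ)
    (hY : Measurable Y) (hZ : Measurable Z) (hφY : ∀ x, |φ x| ≤ Y x) (hψZ : ∀ x, |ψ x| ≤ Z x)
    (hYR : BernsteinCond P Y R) (hZR : BernsteinCond P Z R) (hR : 0 < R)
    {p : ℕ} (hp : p ≠ 0) {t : ℝ} (ht : 0 < t) :
    (Measure.pi fun _ : Fin p => P)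
        {X | t ≤ |(p : ℝ)⁻¹ * ∑ k, (φ (X k) + ψ (X k)) -
          ∫ X' : Fin p → Ω, (p : ℝ)⁻¹ * ∑ k, (φ (X' k) + ψ (X' k)) ∂(Measure.pi fun _ => P)|} ≤
      ENNReal.ofReal (4 * Real.exp (-(p * (t / 2) ^ 2) / (2 * R ^ 2 + 2 * R * (t / 2)))) := by
  have hl : 0 < (2 * R)⁻¹ := by positivity
  have hlR : (2 * R)⁻¹ * R < 1 := by
    rw [inv_mul_lt_iff₀ (by positivity)]; linarith
  have hφi := integral_mean_pi (hYR.integrable hφ hY hφY hl hlR) hp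
  have hψi := integral_mean_pi (hZR.integrable hψ hZ hψZ hl hlR) hp
  have h1 := hYR.measure_abs_ge_le hφ hY hφY hR hp (half_pos ht)
  have h2 := hZR.measure_abs_ge_le hψ hZ hψZ hR hp (half_pos ht)
  simp only [Finset.sum_add_distrib, mul_add]
  rw [integral_add hφi.1 hψi.1, hφi.2, hψi.2]
  refine (measure_mono (t := {X : Fin p → Ω | t / 2 ≤ |(p : ℝ)⁻¹ * ∑ k, φ (X k) - ∫ x, φ x ∂P|} ∪
    {X | t / 2 ≤ |(p : ℝ)⁻¹ * ∑ k, ψ (X k) - ∫ x, ψ x ∂P|}) fun X hX => ?_).trans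
    ((measure_union_le _ _).trans ((add_le_add h1 h2).trans (le_of_eq ?_)))
  · simp only [Set.mem_union, Set.mem_ofPred_eq] at hX ⊢
    by_contra! hcon
    have h3 := abs_add_le ((p : ℝ)⁻¹ * ∑ k, φ (X k) - ∫ x, φ x ∂P)
      ((p : ℝ)⁻¹ * ∑ k, ψ (X k) - ∫ x, ψ x ∂P)
    rw [add_sub_add_comm] at hX
    linarith [hcon.1, hcon.2]
  · rw [← ENNReal.ofReal_add (by positivity) (by positivity)]
    congr 1
    ring

variable {n : ℕ}

/-- Coefficients of the normalized derivative of `⟨q(w), x⟩` along the ray through `w`. -/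
def rayCoeff (n : ℕ) (hn : 0 < n) (w : EuclideanSpace ℝ (Fin (n - 1))) (i : Fin n) : ℝ :=
  padZero n w i / ‖w‖ + if i = lastIdx n hn then -(‖w‖ / √(1 - ‖w‖ ^ 2)) else 0

lemma sum_rayCoeff_mul (hn : 0 < n) {w : EuclideanSpace ℝ (Fin (n - 1))} (hw0 : w ≠ 0)
    (x : Fin n → ℝ) : ∑ i, rayCoeff n hn w i * x i = rayDeriv n hn w x 1 / ‖w‖ := by
  have hr : ‖w‖ ≠ 0 := norm_ne_zero_iff.2 hw0
  simp only [rayCoeff, rayDeriv, add_mul, Finset.sum_add_distrib, ite_mul, zero_mul,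
    Finset.sum_ite_eq', Finset.mem_univ, if_true, add_div, Finset.sum_div, one_pow, one_mul]
  congr 1
  · exact Finset.sum_congr rfl fun i _ => by ring
  · field_simp

lemma sum_rayCoeff_sq (hn : 0 < n) {w : EuclideanSpace ℝ (Fin (n - 1))} (hw0 : w ≠ 0)
    (hw : ‖w‖ < 1) : ∑ i, rayCoeff n hn w i ^ 2 = (1 - ‖w‖ ^ 2)⁻¹ := by
  have hr : ‖w‖ ≠ 0 := norm_ne_zero_iff.2 hw0
  have hpos := one_sub_sq_pos hw
  have h : ∀ i, rayCoeff n hn w i ^ 2 = padZero n w i ^ 2 / ‖w‖ ^ 2 +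
      if i = lastIdx n hn then ‖w‖ ^ 2 / (1 - ‖w‖ ^ 2) else 0 := fun i => by
    unfold rayCoeff
    split_ifs with hi
    · rw [hi, padZero_lastIdx, zero_div, zero_add, neg_sq, div_pow, Real.sq_sqrt hpos.le]
      simp
    · rw [add_zero, add_zero, div_pow]
  simp only [h, Finset.sum_add_distrib, ← Finset.sum_div, sum_padZero_sq hn,
    Finset.sum_ite_eq', Finset.mem_univ, if_true]
  field_simp
  ring

end Concentration

/-- Proposition: pointwise concentration of the Hessian quadratic form. -/
theorem statement8 (n p : ℕ) (θ μ : ℝ) (hθ : θ ∈ Set.Ioo (0 : ℝ) 1) (hμ0 : 0 < μ)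
    (hμ : μ ≤ 1 / Real.sqrt n)
    (w : EuclideanSpace ℝ (Fin (n - 1))) (hw : w ∈ GammaSet n) (hw0 : w ≠ 0)
    (t : ℝ) (ht : 0 < t) :
    bgMatrix θ n p
        {X | t ≤ |⟪hessg n p μ (Matrix.of X) w w, w⟫ / ‖w‖ ^ 2 -
                  ∫ X', ⟪hessg n p μ (Matrix.of X') w w, w⟫ / ‖w‖ ^ 2 ∂bgMatrix θ n p|} ≤
      ENNReal.ofReal
        (4 * Real.exp (-((p : ℝ) * μ ^ 2 * t ^ 2) /
          (512 * (n : ℝ) ^ 2 + 32 * n * μ * t))) := by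
  have : Fact (θ ∈ Set.Ioo (0 : ℝ) 1) := ⟨hθ⟩
  rcases eq_or_ne p 0 with rfl | hp
  · refine prob_le_one.trans ?_
    simp
  have hn : 0 < n := by
    rcases Nat.eq_zero_or_pos n with rfl | h
    · exact absurd (Subsingleton.elim (α := EuclideanSpace ℝ (Fin 0)) w 0) hw0
    · exact h
  have hn' : (0 : ℝ) < n := by exact_mod_cast hn
  have hr : 0 < ‖w‖ := norm_pos_iff.2 hw0
  have hr2 : ‖w‖ ^ 2 < (4 * (n : ℝ) - 1) / (4 * n) := (Real.lt_sqrt hr.le).1 hw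
  have hq : 1 / (4 * (n : ℝ)) < 1 - ‖w‖ ^ 2 := by
    have : (4 * (n : ℝ) - 1) / (4 * n) = 1 - 1 / (4 * n) := by field_simp
    linarith
  have hpos : 0 < 1 - ‖w‖ ^ 2 := lt_trans (by positivity) hq
  have hw1 : ‖w‖ < 1 := by nlinarith
  have hinv : (1 - ‖w‖ ^ 2)⁻¹ ≤ 4 * (n : ℝ) := by
    rw [inv_le_comm₀ hpos (by positivity), ← one_div]
    exact hq.le
  set q := √(1 - ‖w‖ ^ 2) with hq_def
  have hq0 : 0 < q := Real.sqrt_pos.2 hpos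
  have hqsq : q⁻¹ ^ 2 ≤ 4 * (n : ℝ) := by rwa [inv_pow, Real.sq_sqrt hpos.le]
  have hsn : √(n : ℝ) ≤ μ⁻¹ := by
    have h1 : 0 < √(n : ℝ) := Real.sqrt_pos.2 hn'
    rw [one_div] at hμ
    exact (le_inv_comm₀ hμ0 h1).1 hμ
  set R : ℝ := 8 * n / μ with hR_def
  have hR : 0 < R := by positivity
  have hqR : (q ^ 3)⁻¹ ≤ R := by
    have h1 : q⁻¹ ≤ 2 * √(n : ℝ) := by
      refine abs_le_of_sq_le_sq' ?_ (by positivity) |>.2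
      rw [mul_pow, Real.sq_sqrt hn'.le]
      linarith
    calc (q ^ 3)⁻¹ = q⁻¹ ^ 2 * q⁻¹ := by rw [← inv_pow]; ring
      _ ≤ (4 * n) * (2 * μ⁻¹) := by gcongr; linarith
      _ = R := by rw [hR_def]; ring
  set φ : (Fin n → ℝ) → ℝ := fun x => μ⁻¹ * (Real.cosh ((∑ i, qmap n w i * x i) / μ) ^ 2)⁻¹ *
    (∑ i, rayCoeff n hn w i * x i) ^ 2 with hφ_def
  set ψ : (Fin n → ℝ) → ℝ := fun x => -(Real.tanh ((∑ i, qmap n w i * x i) / μ) *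
    ((q ^ 3)⁻¹ * x (lastIdx n hn))) with hψ_def
  have htanh : Continuous Real.tanh :=
    continuous_iff_continuousAt.2 fun x => (hasDerivAt_tanh x).continuousAt
  have hφ : Measurable φ := by fun_prop
  have hψ : Measurable ψ := by have := htanh.measurable; fun_prop
  have hform : ∀ X : Fin n → Fin p → ℝ, ⟪hessg n p μ (Matrix.of X) w w, w⟫ / ‖w‖ ^ 2 =
      (p : ℝ)⁻¹ * ∑ k, (φ (fun i => X i k) + ψ (fun i => X i k)) := fun X => by
    rw [inner_hessg hn hμ0.ne' _ hw1, mul_div_assoc, Finset.sum_div]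
    congr 1
    refine Finset.sum_congr rfl fun k _ => ?_
    simp only [hφ_def, hψ_def, sum_rayCoeff_mul hn hw0, Matrix.of_apply]
    field_simp
    ring
  simp only [hform]
  have hcol := measurePreserving_columns (θ := θ) n p
  have hmean : Measurable fun X : Fin p → Fin n → ℝ => (p : ℝ)⁻¹ * ∑ k, (φ (X k) + ψ (X k)) := by
    fun_prop
  have hE : ∫ X, (p : ℝ)⁻¹ * ∑ k, (φ (fun i => X i k) + ψ (fun i => X i k)) ∂bgMatrix θ n p =
      ∫ X : Fin p → Fin n → ℝ, (p : ℝ)⁻¹ * ∑ k, (φ (X k) + ψ (X k))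
        ∂(Measure.pi fun _ => bgVec θ n) := by
    rw [← hcol.map_eq, integral_map hcol.aemeasurable hmean.aestronglyMeasurable]
  rw [hE]
  have hset := hcol.measure_preimage (s := {X : Fin p → Fin n → ℝ |
    t ≤ |(p : ℝ)⁻¹ * ∑ k, (φ (X k) + ψ (X k)) -
      ∫ X' : Fin p → Fin n → ℝ, (p : ℝ)⁻¹ * ∑ k, (φ (X' k) + ψ (X' k))
        ∂(Measure.pi fun _ => bgVec θ n)|})
    (measurableSet_le measurable_const (hmean.sub_const _).abs).nullMeasurableSet
  refine (le_of_eq hset).trans ?_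
  have hbern := measure_abs_add_ge_le (P := bgVec θ n) hφ hψ
    (Y := fun x => μ⁻¹ * (∑ i, rayCoeff n hn w i * x i) ^ 2)
    (Z := fun x => R * |x (lastIdx n hn)|) (by fun_prop) (by fun_prop) (fun x => ?_) (fun x => ?_)
    (bernsteinCond_sq (rayCoeff n hn w) ?_ (inv_pos.2 hμ0) ?_) (bernsteinCond_abs _ hR) hR hp ht
  · refine hbern.trans (le_of_eq ?_)
    congr 3
    rw [hR_def]
    field_simp
    ring
  · have h1 : (Real.cosh ((∑ i, qmap n w i * x i) / μ) ^ 2)⁻¹ ≤ 1 :=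
      inv_le_one_of_one_le₀ (one_le_pow₀ (Real.one_le_cosh _))
    rw [abs_of_nonneg (by positivity)]
    exact mul_le_mul_of_nonneg_right (mul_le_of_le_one_right (inv_pos.2 hμ0).le h1) (sq_nonneg _)
  · simp only [hψ_def, abs_neg, abs_mul]
    rw [abs_of_pos (by positivity : 0 < (q ^ 3)⁻¹)]
    refine (mul_le_of_le_one_left (by positivity) (Real.abs_tanh_lt_one _).le).trans ?_
    gcongr
  · rw [sum_rayCoeff_sq hn hw0 hw1]; positivity
  · rw [sum_rayCoeff_sq hn hw0 hw1, hR_def]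
    calc 2 * μ⁻¹ * (1 - ‖w‖ ^ 2)⁻¹ ≤ 2 * μ⁻¹ * (4 * n) := by gcongr
      _ = 8 * n / μ := by ring

end
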